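/- Fix a vertex of the complete graph K₄. The number of closed walks based at that vertex which have length exactly 10, have no backtracking (no two consecutive darts are reverses of each other), and are balanced (for every dart d, the number of occurrences of d among the darts equals the number of occurrences of the reversed dart of d) is exactly 30. -/

import Mathlib

/-- The complete graph on four vertices (`Fin 4`). -/
abbrev GyrK4 : SimpleGraph (Fin 4) := ⊤

/-!
Graph isomorphisms preserve non-backtracking and balanced loops, so in `K₄` their number does not
depend on the base point and may be computed at `0` by enumeration: a non-backtracking walk is
extended one step at a time, remembering only the previous vertex, and the walks of length `10`
that return to `0` are tested for balance.

The value is explained by theta graphs. Each loop found traverses all edges of `K₄` but one, exactly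
once in each direction. Deleting an edge of `K₄` leaves a theta graph, which carries two such
circuits up to base point, inverse to each other, and each visits a vertex as often as its degree.
The vertex `0` has degree `3` in three of these theta graphs and degree `2` in the other three,
which gives `2 * (3 * 3 + 3 * 2) = 30`.
-/

section BalancedLoops

open SimpleGraph

variable {V V' : Type*} {G : SimpleGraph V} {G' : SimpleGraph V'} {u v w : V}

/-- A walk is non-backtracking if no dart on it is immediately followed by its reverse. For a closed
walk, the last dart may still be the reverse of the first one. -/
def IsNonbacktracking (p : G.Walk u v) : Prop :=
  p.darts.IsChain fun d d' => d' ≠ d.symm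

theorem isNonbacktracking_nil : IsNonbacktracking (Walk.nil : G.Walk u u) :=
  List.isChain_nil

theorem isNonbacktracking_cons {h : G.Adj u v} {p : G.Walk v w} :
    IsNonbacktracking (Walk.cons h p) ↔ IsNonbacktracking p ∧ (¬p.Nil → p.snd ≠ u) := by
  cases p <;> simp [IsNonbacktracking, Dart.ext_iff, and_comm]

theorem mapDart_injective {f : G →g G'} (hf : Function.Injective f) :
    Function.Injective f.mapDart := fun _ _ h =>
  Dart.toProd_injective (hf.prodMap hf (congrArg Dart.toProd h))

theorem isNonbacktracking_map {f : G →g G'} (hf : Function.Injective f) {p : G.Walk u v} :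
    IsNonbacktracking (p.map f) ↔ IsNonbacktracking p := by
  have mapDart_symm (d : G.Dart) : (f.mapDart d).symm = f.mapDart d.symm := rfl
  simp only [IsNonbacktracking, Walk.darts_map, List.isChain_map, mapDart_symm,
    (mapDart_injective hf).ne_iff]

theorem walk_map_bijective (f : G ≃g G') (u v : V) :
    Function.Bijective (Walk.map f.toHom : G.Walk u v → G'.Walk (f u) (f v)) := by
  refine ⟨Walk.map_injective_of_injective f.injective u v, fun q => ?_⟩
  have toHom_comp_symm : f.toHom.comp f.symm.toHom = Hom.id := by
    ext x
    exact f.apply_symm_apply x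
  refine ⟨(q.map f.symm.toHom).copy (f.symm_apply_apply u) (f.symm_apply_apply v), ?_⟩
  rw [Walk.map_copy, Walk.map_map, Walk.map_eq_of_eq q _ toHom_comp_symm, Walk.map_id]
  exact Walk.copy_copy q _ _ _ _

variable [DecidableEq V] [DecidableEq V']

/-- A walk is balanced if it traverses every edge equally often in both directions; for a closed
walk this says that its homology class vanishes. -/
def IsBalanced (p : G.Walk u v) : Prop :=
  ∀ d : G.Dart, p.darts.count d = p.darts.count d.symm

theorem isBalanced_iff_perm_map_symm {p : G.Walk u v} :
    IsBalanced p ↔ p.darts.Perm (p.darts.map Dart.symm) := by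
  rw [List.perm_iff_count]
  refine forall_congr' fun d => ?_
  rw [← List.count_map_of_injective p.darts _ Dart.symm_involutive.injective d.symm, d.symm_symm]

instance : DecidablePred (IsBalanced (G := G) (u := u) (v := v)) := fun _ =>
  decidable_of_iff _ isBalanced_iff_perm_map_symm.symm

theorem isBalanced_map {f : G →g G'} (hf : Function.Injective f) {p : G.Walk u v} :
    IsBalanced (p.map f) ↔ IsBalanced p := by
  have symm_comp_mapDart : Dart.symm ∘ f.mapDart = f.mapDart ∘ Dart.symm := rfl
  rw [isBalanced_iff_perm_map_symm, isBalanced_iff_perm_map_symm, Walk.darts_map, List.map_map,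
    symm_comp_mapDart, ← List.map_map, List.map_perm_map_iff (mapDart_injective hf)]

/-- The non-backtracking balanced closed walks of length `n` at `v`. For `K₄` they lift to the loops
of length `n` on the Gyroid graph, its maximal abelian cover. -/
def balancedLoops (G : SimpleGraph V) (n : ℕ) (v : V) : Set (G.Walk v v) :=
  {p | p.length = n ∧ IsNonbacktracking p ∧ IsBalanced p}

theorem card_balancedLoops_iso_apply (f : G ≃g G') (n : ℕ) (v : V) :
    Nat.card (balancedLoops G' n (f v)) = Nat.card (balancedLoops G n v) := by
  refine (Nat.card_congr <| (Equiv.ofBijective _ (walk_map_bijective f v v)).subtypeEquiv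
    fun p => ?_).symm
  have hf : Function.Injective f.toHom := f.injective
  simp only [balancedLoops, Set.mem_ofPred_eq, Equiv.ofBijective_apply, Walk.length_map,
    isNonbacktracking_map hf, isBalanced_map hf]

theorem card_balancedLoops_top (n : ℕ) (v w : V) :
    Nat.card (balancedLoops (⊤ : SimpleGraph V) n v) =
      Nat.card (balancedLoops (⊤ : SimpleGraph V) n w) := by
  have swap_apply : Iso.completeGraph (Equiv.swap w v) w = v := Equiv.swap_apply_left w v
  rw [← card_balancedLoops_iso_apply (Iso.completeGraph (Equiv.swap w v)) n w, swap_apply]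

variable (G) in
/-- Prepending a step to a walk, bundled as an embedding so that `Finset.map` applies: walks with
different first steps need no deduplication, which keeps the kernel enumeration cheap. -/
def consEmbedding (u w : V) : (Σ x : G.neighborSet u, G.Walk x w) ↪ G.Walk u w where
  toFun q := Walk.cons q.1.2 q.2
  inj' := by
    rintro ⟨⟨x, hx⟩, p⟩ ⟨⟨y, hy⟩, q⟩ hpq
    cases hpq
    rfl

variable [Fintype V] [DecidableRel G.Adj]

variable (G) in
/-- The finset of non-backtracking walks of length `n` from `u` to `w` that do not continue to `a`,
the vertex visited just before `u`. Taking `a = u` imposes nothing on the first step. -/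
def nonbacktrackingWalks (w : V) : ℕ → V → (u : V) → Finset (G.Walk u w)
  | 0, _, u => if h : u = w then {Walk.nil.copy rfl h} else ∅
  | n + 1, a, u =>
    (Finset.sigma {x : G.neighborSet u | x.1 ≠ a} fun x => nonbacktrackingWalks w n u x).map
      (consEmbedding G u w)

theorem nil_notMem_nonbacktrackingWalks {n : ℕ} {a : V} :
    Walk.nil ∉ nonbacktrackingWalks G w (n + 1) a w := by
  rw [nonbacktrackingWalks, Finset.mem_map]
  rintro ⟨q, -, hq⟩
  exact Walk.not_nil_cons (hq ▸ Walk.Nil.nil)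

theorem cons_mem_nonbacktrackingWalks {n : ℕ} {a : V} {h : G.Adj u v} {p : G.Walk v w} :
    Walk.cons h p ∈ nonbacktrackingWalks G w (n + 1) a u ↔
      v ≠ a ∧ p ∈ nonbacktrackingWalks G w n u v := by
  change consEmbedding G u w ⟨⟨v, h⟩, p⟩ ∈ _ ↔ _
  rw [nonbacktrackingWalks, Finset.mem_map']
  simp

theorem mem_nonbacktrackingWalks {n : ℕ} {a : V} {p : G.Walk u w} :
    p ∈ nonbacktrackingWalks G w n a u ↔
      p.length = n ∧ IsNonbacktracking p ∧ (¬p.Nil → p.snd ≠ a) := by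
  induction p generalizing n a with
  | nil =>
    cases n with
    | zero => simp [nonbacktrackingWalks, isNonbacktracking_nil]
    | succ n => simp [nil_notMem_nonbacktrackingWalks]
  | cons h p ih =>
    cases n with
    | zero =>
      simp only [nonbacktrackingWalks]
      split
      · subst_vars; simp
      · simp
    | succ n =>
      simp only [cons_mem_nonbacktrackingWalks, ih, isNonbacktracking_cons, Walk.length_cons,
        Nat.add_right_cancel_iff, Walk.not_nil_cons, not_false_eq_true, Walk.snd_cons, forall_const]
      tauto

theorem card_balancedLoops_eq_card_filter (n : ℕ) (v : V) :
    Nat.card (balancedLoops G n v) =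
      ((nonbacktrackingWalks G v n v v).filter IsBalanced).card := by
  refine Nat.subtype_card _ fun p => ?_
  have snd_ne : ¬p.Nil → p.snd ≠ v := fun hp => (p.adj_snd hp).ne'
  rw [Finset.mem_filter, mem_nonbacktrackingWalks, and_iff_left snd_ne, and_assoc]
  rfl

end BalancedLoops

/-- For any fixed vertex of `K₄`, the number of closed walks based at
that vertex of length exactly `10`, with no backtracking (no two consecutive darts are
reverses of each other) and balanced (every dart occurs as often as its reverse),
is exactly `30`. -/
theorem gyroid_count_minimal_loops (v : Fin 4) :
    Nat.card {p : GyrK4.Walk v v //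
        p.length = 10 ∧
        p.darts.Chain' (fun d d' => d' ≠ d.symm) ∧
        ∀ d : GyrK4.Dart, p.darts.count d = p.darts.count d.symm} = 30 := by
  calc
    _ = Nat.card (balancedLoops GyrK4 10 v) := rfl
    _ = Nat.card (balancedLoops GyrK4 10 0) := card_balancedLoops_top 10 v 0
    _ = ((nonbacktrackingWalks GyrK4 0 10 0 0).filter IsBalanced).card :=
      card_balancedLoops_eq_card_filter 10 0
    _ = 30 := by decide +kernel
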